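/- arXiv:1605.02618 — 2 statements merged into one kernel-verified Lean document; each statement's English description precedes it below -/
import Mathlib

section
/- For all integers n ≥ 2 and all integers k ≥ 0 one has the recurrence (in ℤ): R⁻(n,k) = 2k·R⁻(n−1,k) + (2n−4k+3)·R⁻(n−1,k−1) + R(n−1,k−1), where terms with second argument −1 vanish. -/
/-!
Every signed simsun permutation of rank `n + 1` arises in exactly one way by inserting `n + 1` or
`-(n + 1)` into the word `0 w₁ ⋯ wₙ` of a signed simsun permutation of rank `n`, and an insertion is
admissible iff it creates no double descent. Let the old word have `d` descents.

* Inserting `n + 1` into a descent or at the end is always admissible and keeps `d`; inserting it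
  into an ascent raises `d` by one and is admissible iff no descent follows (`goodCount_pos`).
* Inserting `-(n + 1)` into a descent is always admissible and keeps `d`; inserting it into an
  ascent or at the end raises `d` by one and is admissible iff no descent precedes
  (`goodCount_neg`).

If `w₁ < 0`, all of these except `n + 1` in front of `w₁` keep the first letter negative; this makes
`2d` insertions preserving `d` and `2n - 4d + 2` raising it. If `w₁ > 0`, only `-(n + 1)` in front of
`w₁` gives a negative first letter, and it raises `d` by one. Summing over all words
(`countP_extend`, `countP_flatMap_linear`) gives the recurrence.

The counting is carried out in the list `words n`, generated by insertion. It contains the word of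
every signed permutation and has length `2 ^ n * n!`, hence it lists those words without repetition
(`card_filter_eq_countP`).
-/

open Finset

/-- A signed permutation of rank `n`, encoded as an (unsigned) permutation of
`Fin n` together with a choice of sign for each position: the entry
`π(i+1)` of the word is `±(σ(i)+1)` where the sign is `-` iff `sgn i = true`. -/
abbrev SignedPerm (n : ℕ) := Equiv.Perm (Fin n) × (Fin n → Bool)

/-- The entry `π(j+1)` of the word of a signed permutation. -/
def entry {n : ℕ} (π : SignedPerm n) (j : Fin n) : ℤ :=
  (if π.2 j then -1 else 1) * (((π.1 j : ℕ) : ℤ) + 1)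

/-- The word `π(0)π(1)⋯π(n)` of a signed permutation (with the leading `0`). -/
def word {n : ℕ} (π : SignedPerm n) : List ℤ :=
  0 :: List.ofFn (entry π)

/-- `π(i)` for `0 ≤ i ≤ n` (and `0` outside this range). -/
def wordFn {n : ℕ} (π : SignedPerm n) (i : ℕ) : ℤ :=
  if h : 1 ≤ i ∧ i ≤ n then entry π ⟨i - 1, by omega⟩ else 0

/-- A word has no double descent: no three consecutive strictly decreasing entries. -/
def noDD : List ℤ → Bool
  | a :: b :: c :: rest => (!(decide (b < a) && decide (c < b))) && noDD (b :: c :: rest)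
  | _ => true

/-- A signed permutation is simsun if for every `0 ≤ k ≤ n`, deleting the entries
`±n, …, ±(n-k+1)` (i.e. keeping the entries of absolute value `≤ m := n - k`) from the
word `π(0)π(1)⋯π(n)` leaves a word with no three consecutive strictly decreasing
entries. -/
def IsSimsun {n : ℕ} (π : SignedPerm n) : Prop :=
  ∀ m ≤ n, noDD ((word π).filter (fun a => a.natAbs ≤ m)) = true

instance {n : ℕ} : DecidablePred (IsSimsun (n := n)) := fun _ => by
  unfold IsSimsun; infer_instance

/-- The type-B descent number `des_B(π) = #{0 ≤ i ≤ n-1 : π(i) > π(i+1)}`. -/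
def desB {n : ℕ} (π : SignedPerm n) : ℕ :=
  ((Finset.range n).filter (fun i => wordFn π (i + 1) < wordFn π i)).card

/-- The set of signed simsun permutations of rank `n`. -/
def RB (n : ℕ) : Finset (SignedPerm n) := univ.filter IsSimsun

/-- Signed simsun permutations with `π(1) > 0` (for `n = 0`, the empty permutation
is included, following the convention `R⁺_0 = 1`). -/
def RBp (n : ℕ) : Finset (SignedPerm n) :=
  (RB n).filter (fun π => 0 < wordFn π 1 ∨ n = 0)

/-- Signed simsun permutations with `π(1) < 0`. -/
def RBm (n : ℕ) : Finset (SignedPerm n) :=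
  (RB n).filter (fun π => wordFn π 1 < 0)

/-- A signed permutation is even-signed if its word has an even number of negative entries. -/
def IsEvenSigned {n : ℕ} (π : SignedPerm n) : Prop :=
  (univ.filter (fun j => π.2 j = true)).card % 2 = 0

instance {n : ℕ} : DecidablePred (IsEvenSigned (n := n)) := fun _ => by
  unfold IsEvenSigned; infer_instance

def RD (n : ℕ) : Finset (SignedPerm n) := (RB n).filter IsEvenSigned
def RT (n : ℕ) : Finset (SignedPerm n) := (RB n).filter (fun π => ¬ IsEvenSigned π)
def RDp (n : ℕ) : Finset (SignedPerm n) := (RD n).filter (fun π => 0 < wordFn π 1 ∨ n = 0)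
def RDm (n : ℕ) : Finset (SignedPerm n) := (RD n).filter (fun π => wordFn π 1 < 0)
def RTp (n : ℕ) : Finset (SignedPerm n) := (RT n).filter (fun π => 0 < wordFn π 1 ∨ n = 0)
def RTm (n : ℕ) : Finset (SignedPerm n) := (RT n).filter (fun π => wordFn π 1 < 0)

/-- `R(n,k)`, as an integer, vanishing for `k < 0`. -/
def Rcnt (n : ℕ) (k : ℤ) : ℤ := ((RB n).filter (fun π => (desB π : ℤ) = k)).card
def Rpcnt (n : ℕ) (k : ℤ) : ℤ := ((RBp n).filter (fun π => (desB π : ℤ) = k)).card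
def Rmcnt (n : ℕ) (k : ℤ) : ℤ := ((RBm n).filter (fun π => (desB π : ℤ) = k)).card
def Dcnt (n : ℕ) (k : ℤ) : ℤ := ((RD n).filter (fun π => (desB π : ℤ) = k)).card
def Tcnt (n : ℕ) (k : ℤ) : ℤ := ((RT n).filter (fun π => (desB π : ℤ) = k)).card
def Dpcnt (n : ℕ) (k : ℤ) : ℤ := ((RDp n).filter (fun π => (desB π : ℤ) = k)).card
def Dmcnt (n : ℕ) (k : ℤ) : ℤ := ((RDm n).filter (fun π => (desB π : ℤ) = k)).card
def Tpcnt (n : ℕ) (k : ℤ) : ℤ := ((RTp n).filter (fun π => (desB π : ℤ) = k)).card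
def Tmcnt (n : ℕ) (k : ℤ) : ℤ := ((RTm n).filter (fun π => (desB π : ℤ) = k)).card

/-! ### Words as lists -/

/-- The number of descents of a word. -/
def desList : List ℤ → ℕ
  | a :: b :: l => (if b < a then 1 else 0) + desList (b :: l)
  | _ => 0

/-- All the words obtained by inserting `x` somewhere in a word. -/
def insAll (x : ℤ) : List ℤ → List (List ℤ)
  | [] => [[x]]
  | b :: l => (x :: b :: l) :: (insAll x l).map (b :: ·)

/-- All words (without the leading `0`) of signed permutations of rank `n`, built by inserting
the letter of largest absolute value. -/
def words : ℕ → List (List ℤ)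
  | 0 => [[]]
  | n + 1 => (words n).flatMap fun v => insAll ((n : ℤ) + 1) v ++ insAll (-((n : ℤ) + 1)) v

/-- The word `0 :: l` is simsun of rank `n`. -/
def simsunList (n : ℕ) (l : List ℤ) : Prop :=
  ∀ m ≤ n, noDD ((0 :: l).filter (fun a => a.natAbs ≤ m)) = true

instance (n : ℕ) : DecidablePred (simsunList n) := fun _ => by
  unfold simsunList; infer_instance

/-- The word starts with a descent. -/
def firstDes : List ℤ → Bool
  | a :: b :: _ => decide (b < a)
  | _ => false

theorem noDD_cons (a : ℤ) (l : List ℤ) :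
    noDD (a :: l) = (!(firstDes (a :: l) && firstDes l) && noDD l) := by
  rcases l with _ | ⟨b, _ | ⟨c, l⟩⟩ <;> simp [noDD, firstDes]

theorem desList_cons (a : ℤ) (l : List ℤ) :
    desList (a :: l) = (firstDes (a :: l)).toNat + desList l := by
  rcases l with _ | ⟨b, l⟩
  · simp [desList, firstDes]
  · by_cases h : b < a <;> simp [desList, firstDes, h]

/-! ### The list of all signed words -/

theorem insAll_length (x : ℤ) (l : List ℤ) : (insAll x l).length = l.length + 1 := by
  induction l with
  | nil => rfl
  | cons b l ih => simp [insAll, ih]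

theorem mem_insAll (x : ℤ) (l₁ l₂ : List ℤ) : l₁ ++ x :: l₂ ∈ insAll x (l₁ ++ l₂) := by
  induction l₁ with
  | nil => cases l₂ <;> simp [insAll]
  | cons b l ih => simp [insAll, ih]

theorem exists_of_mem_insAll {x : ℤ} {v l : List ℤ} (h : l ∈ insAll x v) :
    ∃ l₁ l₂, v = l₁ ++ l₂ ∧ l = l₁ ++ x :: l₂ := by
  induction v generalizing l with
  | nil => exact ⟨[], [], by simpa [insAll] using h⟩
  | cons b v ih =>
    simp only [insAll, List.mem_cons, List.mem_map] at h
    rcases h with rfl | ⟨l', h, rfl⟩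
    · exact ⟨[], _, rfl, rfl⟩
    · obtain ⟨l₁, l₂, rfl, rfl⟩ := ih h
      exact ⟨b :: l₁, l₂, rfl, rfl⟩

theorem words_natAbs {n : ℕ} {l : List ℤ} (h : l ∈ words n) :
    l.length = n ∧ ∀ a ∈ l, a ≠ 0 ∧ a.natAbs ≤ n := by
  induction n generalizing l with
  | zero => simp [words] at h; simp [h]
  | succ n ih =>
    simp only [words, List.mem_flatMap, List.mem_append] at h
    obtain ⟨v, hv, h⟩ := h
    have := ih hv
    rcases h with h | h <;>
    · obtain ⟨l₁, l₂, rfl, rfl⟩ := exists_of_mem_insAll h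
      refine ⟨by grind, fun a ha => ?_⟩
      have h2 : a ∈ l₁ ++ l₂ ∨ a.natAbs = n + 1 := by grind
      rcases h2 with h2 | h2
      · have := this.2 a h2
        omega
      · omega

theorem words_length (n : ℕ) : (words n).length = 2 ^ n * n.factorial := by
  induction n with
  | zero => rfl
  | succ n ih =>
    have : ∀ L : List (List ℤ), (∀ v ∈ L, v.length = n) →
        (L.flatMap fun v => insAll ((n : ℤ) + 1) v ++ insAll (-((n : ℤ) + 1)) v).length
          = L.length * (2 * (n + 1)) := by
      intro L hL
      induction L with
      | nil => simp
      | cons v L ih =>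
        have h1 := hL v (by simp)
        rw [List.flatMap_cons, List.length_append, ih (fun w hw => hL w (by simp [hw]))]
        simp only [List.length_append, insAll_length, h1, List.length_cons]
        ring
    rw [words, this _ (fun v hv => (words_natAbs hv).1), ih, Nat.factorial_succ]
    ring

/-- Every arrangement of `±1, …, ±n` arises by successive insertions: the letter of absolute value
`n` is removed and put back. -/
theorem mem_words {n : ℕ} {l : List ℤ} (h : (l.map Int.natAbs).Perm (List.range' 1 n)) :
    l ∈ words n := by
  induction n generalizing l with
  | zero => simpa [words] using h
  | succ n ih =>
    have h1 : n + 1 ∈ l.map Int.natAbs := by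
      rw [h.mem_iff]; simp
    obtain ⟨x, hx, hxn⟩ := List.mem_map.1 h1
    obtain ⟨l₁, l₂, rfl⟩ := List.append_of_mem hx
    have h2 : ((l₁ ++ l₂).map Int.natAbs).Perm (List.range' 1 n) := by
      rw [List.range'_concat] at h
      have h3 : ((n + 1) :: (l₁ ++ l₂).map Int.natAbs).Perm ((n + 1) :: List.range' 1 n) := by
        refine List.Perm.trans ?_ (h.trans ?_)
        · simp only [List.map_append, List.map_cons, hxn]
          exact List.perm_middle.symm
        · rw [one_mul, add_comm 1 n]
          exact List.perm_append_singleton _ _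
      exact h3.cons_inv
    simp only [words, List.mem_flatMap, List.mem_append]
    refine ⟨l₁ ++ l₂, ih h2, ?_⟩
    rcases (show x = (n : ℤ) + 1 ∨ x = -((n : ℤ) + 1) by omega) with rfl | rfl
    · exact Or.inl (mem_insAll _ _ _)
    · exact Or.inr (mem_insAll _ _ _)

/-! ### Transfer from signed permutations to words -/

theorem ofFn_entry_injective (n : ℕ) :
    Function.Injective fun π : SignedPerm n => List.ofFn (entry π) := by
  rintro ⟨σ, s⟩ ⟨τ, t⟩ h
  have h1 : ∀ j, entry (σ, s) j = entry (τ, t) j := fun j => congrFun (List.ofFn_injective h) j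
  have h2 : ∀ j, σ j = τ j ∧ s j = t j := by
    intro j
    have := h1 j
    simp only [entry] at this
    cases hs : s j <;> cases ht : t j <;> simp [hs, ht] at this <;> grind
  exact Prod.ext (Equiv.ext fun j => (h2 j).1) (funext fun j => (h2 j).2)

theorem ofFn_entry_mem_words {n : ℕ} (π : SignedPerm n) : List.ofFn (entry π) ∈ words n := by
  apply mem_words
  have h1 : (List.ofFn (entry π)).map Int.natAbs = (List.finRange n).map (fun j => (π.1 j : ℕ) + 1) := by
    rw [List.ofFn_eq_map, List.map_map]
    apply List.map_congr_left
    intro j _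
    simp only [Function.comp, entry]
    split <;> omega
  rw [h1]
  have h2 : List.range' 1 n = ((List.finRange n).map (fun j : Fin n => (j : ℕ) + 1)) := by
    apply List.ext_getElem <;> simp [add_comm]
  have h3 : (List.finRange n).map (fun j => (π.1 j : ℕ) + 1)
      = ((List.finRange n).map π.1).map (fun j : Fin n => (j : ℕ) + 1) := by simp
  rw [h2, h3]
  exact (Equiv.Perm.map_finRange_perm π.1).map _

/-- Since `words n` has exactly `2 ^ n * n!` members, it lists the words of
the signed permutations without repetition, so counting may take place there. -/
theorem card_filter_eq_countP (n : ℕ) (p : List ℤ → Prop) [DecidablePred p] :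
    (univ.filter fun π : SignedPerm n => p (List.ofFn (entry π))).card =
      (words n).countP (fun l => decide (p l)) := by
  set f := fun π : SignedPerm n => List.ofFn (entry π) with hf
  have hsub : univ.image f ⊆ (words n).toFinset := by
    intro l hl
    obtain ⟨π, -, rfl⟩ := Finset.mem_image.1 hl
    exact List.mem_toFinset.2 (ofFn_entry_mem_words π)
  have hcard : (univ.image f).card = (words n).length := by
    rw [Finset.card_image_of_injective _ (ofFn_entry_injective n), words_length]
    simp [Fintype.card_perm, mul_comm]
  have hle := (words n).toFinset_card_le
  have heq : univ.image f = (words n).toFinset := Finset.eq_of_subset_of_card_le hsub (by omega)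
  have hnd : (words n).Nodup := by
    rw [← List.dedup_eq_self]
    exact (List.dedup_sublist _).eq_of_length (by rw [← List.card_toFinset, ← heq, hcard])
  calc _ = ((univ.image f).filter p).card := by
        rw [Finset.filter_image, Finset.card_image_of_injective _ (ofFn_entry_injective n)]
    _ = _ := by
        rw [heq, List.countP_eq_length_filter, ← List.toFinset_card_of_nodup (hnd.filter _),
          List.toFinset_filter]
        simp

theorem desList_eq_card (a : ℤ) (l : List ℤ) :
    desList (a :: l) = ((Finset.range l.length).filter
      (fun i => (a :: l).getD (i + 1) 0 < (a :: l).getD i 0)).card := by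
  induction l generalizing a with
  | nil => rfl
  | cons b l ih =>
    rw [desList, ih b, Finset.card_filter, Finset.card_filter, List.length_cons,
      Finset.sum_range_succ', add_comm]
    simp

theorem wordFn_eq {n : ℕ} (π : SignedPerm n) (i : ℕ) :
    wordFn π i = (0 :: List.ofFn (entry π)).getD i 0 := by
  unfold wordFn
  rcases i with _ | i
  · simp
  · by_cases h : i < n <;> simp [h, List.getD_eq_getElem?_getD]

theorem desB_eq {n : ℕ} (π : SignedPerm n) : desB π = desList (0 :: List.ofFn (entry π)) := by
  rw [desList_eq_card, desB]
  simp only [wordFn_eq, List.length_ofFn]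

theorem Rcnt_eq (n : ℕ) (k : ℤ) : Rcnt n k =
    (words n).countP (fun l => decide (simsunList n l ∧ (desList (0 :: l) : ℤ) = k)) := by
  rw [← card_filter_eq_countP n (fun l => simsunList n l ∧ (desList (0 :: l) : ℤ) = k)]
  unfold Rcnt RB
  rw [Finset.filter_filter]
  simp only [desB_eq]
  rfl

theorem Rmcnt_eq (n : ℕ) (k : ℤ) : Rmcnt n k =
    (words n).countP (fun l => decide (simsunList n l ∧ l.getD 0 0 < 0 ∧
      (desList (0 :: l) : ℤ) = k)) := by
  rw [← card_filter_eq_countP n (fun l => simsunList n l ∧ l.getD 0 0 < 0 ∧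
      (desList (0 :: l) : ℤ) = k)]
  unfold Rmcnt RBm RB
  rw [Finset.filter_filter, Finset.filter_filter]
  simp only [desB_eq, wordFn_eq]
  rfl

/-! ### Counting insertions -/

/-- Inserting a letter of largest absolute value into a simsun word only requires the new full word
to have no double descent: the smaller restrictions are those of `v`. -/
theorem simsunList_insAll {n : ℕ} {x : ℤ} {v l : List ℤ} (hx : x.natAbs = n + 1)
    (hv : v ∈ words n) (hl : l ∈ insAll x v) :
    simsunList (n + 1) l ↔ simsunList n v ∧ noDD (0 :: l) = true := by
  have hb := (words_natAbs hv).2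
  obtain ⟨l₁, l₂, rfl, rfl⟩ := exists_of_mem_insAll hl
  have h1 : ∀ m ≤ n, (0 :: (l₁ ++ x :: l₂)).filter (fun a => a.natAbs ≤ m)
      = (0 :: (l₁ ++ l₂)).filter (fun a => a.natAbs ≤ m) := by
    intro m hm
    have : ¬ (x.natAbs ≤ m) := by omega
    simp [this]
  have h2 : (0 :: (l₁ ++ x :: l₂)).filter (fun a => a.natAbs ≤ n + 1) = 0 :: (l₁ ++ x :: l₂) := by
    rw [List.filter_eq_self]
    intro a ha
    have h2 : a = 0 ∨ a ∈ l₁ ++ l₂ ∨ a = x := by grind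
    rcases h2 with rfl | h2 | rfl
    · simp
    · have := hb a h2
      simp; omega
    · simp; omega
  constructor
  · intro h
    refine ⟨fun m hm => by rw [← h1 m hm]; exact h m (by omega), ?_⟩
    rw [← h2]
    exact h _ le_rfl
  · rintro ⟨ha, hb⟩ m hm
    rcases Nat.lt_or_ge n m with h | h
    · obtain rfl : m = n + 1 := by omega
      rw [h2]; exact hb
    · rw [h1 m h]; exact ha m h

theorem simsunList_noDD {n : ℕ} {v : List ℤ} (hv : v ∈ words n) (h : simsunList n v) :
    noDD (0 :: v) = true := by
  have h2 : (0 :: v).filter (fun a => a.natAbs ≤ n) = 0 :: v := by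
    rw [List.filter_eq_self]
    intro a ha
    rcases List.mem_cons.1 ha with rfl | ha
    · simp
    · simpa using ((words_natAbs hv).2 a ha).2
  rw [← h2]
  exact h n le_rfl

/-- The word `a :: l` has no double descent, even when preceded (if `p` holds) by a letter larger
than `a`. -/
def Good (p : Bool) (a : ℤ) (l : List ℤ) : Prop :=
  noDD (a :: l) = true ∧ (p && firstDes (a :: l)) = false

instance (p : Bool) (a : ℤ) (l : List ℤ) : Decidable (Good p a l) := by
  unfold Good; infer_instance

theorem good_cons (p : Bool) (a b : ℤ) (l : List ℤ) :
    Good p a (b :: l) ↔ (p && decide (b < a)) = false ∧ Good (decide (b < a)) b l := by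
  unfold Good
  rw [noDD_cons]
  simp only [firstDes, Bool.and_eq_true, Bool.not_eq_true']
  tauto

theorem desList_cons_cons (a b : ℤ) (l : List ℤ) :
    desList (a :: b :: l) = (decide (b < a)).toNat + desList (b :: l) := desList_cons _ _

/-- The number of insertions of `x` into `l` that keep the word `a :: l` good (for the flag `p`)
and give it `k` descents. -/
def goodCount (x : ℤ) (p : Bool) (a : ℤ) (l : List ℤ) (k : ℤ) : ℕ :=
  (insAll x l).countP (fun l' => decide (Good p a l' ∧ (desList (a :: l') : ℤ) = k))

theorem goodCount_nil (x : ℤ) (p : Bool) (a : ℤ) (k : ℤ) :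
    goodCount x p a [] k =
      if (p && decide (x < a)) = false ∧ ((decide (x < a)).toNat : ℤ) = k then 1 else 0 := by
  unfold goodCount
  rw [insAll, List.countP_cons]
  by_cases h : x < a <;> cases p <;> simp [Good, noDD, desList, firstDes, h]

theorem goodCount_cons (x : ℤ) (p : Bool) (a b : ℤ) (l : List ℤ) (k : ℤ)
    (hp : (p && decide (b < a)) = false) :
    goodCount x p a (b :: l) k =
      goodCount x (decide (b < a)) b l (k - (decide (b < a)).toNat) +
      if Good p a (x :: b :: l) ∧ (desList (a :: x :: b :: l) : ℤ) = k then 1 else 0 := by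
  unfold goodCount
  rw [insAll, List.countP_cons, List.countP_map]
  congr 1
  · apply List.countP_congr
    intro l' _
    simp only [Function.comp, good_cons, desList_cons_cons, hp, decide_eq_true_eq]
    push_cast
    simp only [true_and, eq_sub_iff_add_eq, add_comm]
  · simp

/-- Insertions of a letter larger than all others. If `a :: l` has `d` descents, `d + 1` insertions
(into a descent or at the end) preserve `d`; those raising it go into the non-descents that are
not followed by a descent. -/
theorem goodCount_pos {x : ℤ} (p : Bool) {a : ℤ} {l : List ℤ} (ha : a < x)
    (hl : ∀ b ∈ l, b < x) (hg : Good p a l) (k : ℤ) :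
    (goodCount x p a l k : ℤ) =
    (if (desList (a :: l) : ℤ) = k then k + 1 else 0) +
    (if (desList (a :: l) : ℤ) + 1 = k then
      (l.length : ℤ) - 2 * (desList (a :: l)) + (firstDes (a :: l)).toNat else 0) := by
  induction l generalizing a p k with
  | nil =>
    have : ¬ x < a := by omega
    rw [goodCount_nil]
    simp [firstDes, desList, this]
    grind
  | cons b l ih =>
    have hb := hl b (by simp)
    have hxa : ¬ x < a := by omega
    rw [good_cons] at hg
    rw [goodCount_cons _ _ _ _ _ _ hg.1]
    push_cast
    rw [ih _ hb (fun c hc => hl c (by simp [hc])) hg.2]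
    have hg2 := hg.2
    simp only [good_cons, desList_cons_cons, hxa, hb, decide_true, decide_false, List.length_cons]
    unfold Good at hg2 ⊢
    generalize hD : desList (b :: l) = D
    have h3 : firstDes (a :: b :: l) = decide (b < a) := rfl
    rw [h3]
    by_cases h : b < a <;> rcases Bool.eq_false_or_eq_true (firstDes (b :: l)) with hF | hF <;>
      simp [h, hF] at hg2 ⊢ <;> grind

/-- Insertions of a letter smaller than all others. If `a :: l` has `d` descents, `d` insertions
(into a descent) preserve `d`; those raising it go into the non-descents, or the end, that are
not preceded by a descent. -/
theorem goodCount_neg {x : ℤ} (p : Bool) {a : ℤ} {l : List ℤ} (ha : x < a)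
    (hl : ∀ b ∈ l, x < b) (hg : Good p a l) (k : ℤ) :
    (goodCount x p a l k : ℤ) =
    (if (desList (a :: l) : ℤ) = k then k else 0) +
    (if (desList (a :: l) : ℤ) + 1 = k then
      (l.length : ℤ) + 1 - 2 * (desList (a :: l)) - p.toNat else 0) := by
  induction l generalizing a p k with
  | nil =>
    rw [goodCount_nil]
    simp [desList, ha]
    cases p <;> grind
  | cons b l ih =>
    have hb := hl b (by simp)
    have hbx : ¬ b < x := by omega
    rw [good_cons] at hg
    rw [goodCount_cons _ _ _ _ _ _ hg.1]
    push_cast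
    rw [ih _ hb (fun c hc => hl c (by simp [hc])) hg.2]
    have hg2 := hg.2
    simp only [good_cons, desList_cons_cons, ha, hbx, decide_true, decide_false, List.length_cons]
    unfold Good at hg2 ⊢
    generalize hD : desList (b :: l) = D
    have h1 := hg.1
    by_cases h : b < a <;> cases p <;> simp [h, hg2.1] at h1 ⊢ <;> grind

/-- The recurrence for a single word `v` of rank `n`: the insertions of `±(n+1)` into `v` that give
a simsun word with negative first letter and `k` descents. The coefficient is `2n - 4k + 5` because
the last term also counts the words `v` with negative first letter. -/
theorem countP_extend {n : ℕ} (hn : 1 ≤ n) {v : List ℤ} (hv : v ∈ words n) (k : ℤ) :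
    ((insAll ((n : ℤ) + 1) v ++ insAll (-((n : ℤ) + 1)) v).countP
      (fun l => decide (simsunList (n + 1) l ∧ l.getD 0 0 < 0 ∧
        (desList (0 :: l) : ℤ) = k)) : ℤ) =
    2 * k * (if simsunList n v ∧ v.getD 0 0 < 0 ∧ (desList (0 :: v) : ℤ) = k then 1 else 0) +
    (2 * (n : ℤ) - 4 * k + 5) *
      (if simsunList n v ∧ v.getD 0 0 < 0 ∧ (desList (0 :: v) : ℤ) = k - 1 then 1 else 0) +
    (if simsunList n v ∧ (desList (0 :: v) : ℤ) = k - 1 then 1 else 0) := by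
  have hcongr : ∀ x : ℤ, x.natAbs = n + 1 →
      (insAll x v).countP (fun l => decide (simsunList (n + 1) l ∧ l.getD 0 0 < 0 ∧
        (desList (0 :: l) : ℤ) = k)) =
      (insAll x v).countP (fun l => decide (simsunList n v ∧ Good false 0 l ∧ l.getD 0 0 < 0 ∧
        (desList (0 :: l) : ℤ) = k)) := by
    intro x hx
    apply List.countP_congr
    intro l hl
    simp only [simsunList_insAll hx hv hl, Good, decide_eq_true_eq, Bool.false_and]
    tauto
  rw [List.countP_append, hcongr _ (by omega), hcongr _ (by omega)]
  by_cases hs : simsunList n v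
  swap
  · simp [hs]
  have hdd : Good false 0 v := ⟨simsunList_noDD hv hs, rfl⟩
  obtain ⟨hlen, hbd⟩ := words_natAbs hv
  rcases v with _ | ⟨b, v⟩
  · simp at hlen; omega
  have hb := hbd b (by simp)
  -- An insertion is either in front of `b`, or behind `b` and then keeps the sign of the head.
  have hsplit : ∀ x : ℤ, x.natAbs = n + 1 →
      (insAll x (b :: v)).countP (fun l => decide (simsunList n (b :: v) ∧ Good false 0 l ∧
        l.getD 0 0 < 0 ∧ (desList (0 :: l) : ℤ) = k)) =
      (if b < 0 then goodCount x true b v (k - 1) else 0) +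
      (if x < 0 ∧ Good false 0 (x :: b :: v) ∧ (desList (0 :: x :: b :: v) : ℤ) = k
        then 1 else 0) := by
    intro x hx
    rw [insAll, List.countP_cons, List.countP_map]
    congr 1
    · by_cases hb0 : b < 0
      · rw [if_pos hb0, goodCount]
        apply List.countP_congr
        intro l' _
        simp only [Function.comp, good_cons, desList_cons_cons, hb0, hs, decide_eq_true_eq]
        push_cast
        simp [hb0, eq_sub_iff_add_eq, add_comm]
      · rw [if_neg hb0, List.countP_eq_zero]
        intro l' _
        simp [hb0]
    · simp only [hs, decide_eq_true_eq]
      simp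
      grind
  rw [hsplit _ (by omega), hsplit _ (by omega)]
  have hx : ¬ ((n : ℤ) + 1 < 0) := by omega
  have hx' : -((n : ℤ) + 1) < 0 := by omega
  have hbx : ¬ b < -((n : ℤ) + 1) := by omega
  rw [good_cons] at hdd
  simp only [good_cons, desList_cons_cons, hx, hx', hbx, hs, true_and, false_and, if_false,
    decide_true, decide_false]
  have hlen' : (n : ℤ) = v.length + 1 := by simp at hlen; omega
  have hg2 := hdd.2
  by_cases hb0 : b < 0
  · simp only [hb0, decide_true] at hg2
    have hpos := goodCount_pos (x := (n : ℤ) + 1) true (a := b) (l := v) (by omega)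
      (fun c hc => by have := hbd c (by simp [hc]); omega) hg2 (k - 1)
    have hneg := goodCount_neg (x := -((n : ℤ) + 1)) true (a := b) (l := v) (by omega)
      (fun c hc => by have := hbd c (by simp [hc]); omega) hg2 (k - 1)
    unfold Good at hg2 ⊢
    simp only [Bool.true_and] at hg2
    rw [hg2.2] at hpos
    push_cast
    simp only [hb0, if_true, hpos, hneg, hg2.1]
    generalize desList (b :: v) = D
    simp [hb0]
    grind
  · simp only [hb0, decide_false] at hg2
    unfold Good at hg2 ⊢
    simp [hb0, hg2.1]
    grind

/-- Additivity of counting over the families of extensions `f v`. -/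
theorem countP_flatMap_linear {α β : Type*} (L : List α) (f : α → List β) (q : β → Bool)
    (p₁ p₂ p₃ : α → Prop) [DecidablePred p₁] [DecidablePred p₂] [DecidablePred p₃] (A B : ℤ)
    (h : ∀ v ∈ L, ((f v).countP q : ℤ) =
      A * (if p₁ v then 1 else 0) + B * (if p₂ v then 1 else 0) + (if p₃ v then 1 else 0)) :
    ((L.flatMap f).countP q : ℤ) = A * L.countP (fun v => decide (p₁ v)) +
      B * L.countP (fun v => decide (p₂ v)) + L.countP (fun v => decide (p₃ v)) := by
  induction L with
  | nil => simp
  | cons v L ih =>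
    rw [List.flatMap_cons, List.countP_append]
    push_cast
    rw [h v (by simp), ih (fun w hw => h w (by simp [hw]))]
    simp only [List.countP_cons, decide_eq_true_eq]
    push_cast
    ring

/-- For all integers `n ≥ 2`, `k ≥ 0`:
`R⁻(n,k) = 2k·R⁻(n−1,k) + (2n−4k+3)·R⁻(n−1,k−1) + R(n−1,k−1)`. -/
theorem stmt1 (n : ℕ) (hn : 2 ≤ n) (k : ℤ) (hk : 0 ≤ k) :
    Rmcnt n k =
      2 * k * Rmcnt (n - 1) k + (2 * (n : ℤ) - 4 * k + 3) * Rmcnt (n - 1) (k - 1) +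
        Rcnt (n - 1) (k - 1) := by
  obtain ⟨n, rfl⟩ : ∃ m, n = m + 1 := ⟨n - 1, by omega⟩
  rw [Nat.add_sub_cancel, Rmcnt_eq, Rmcnt_eq, Rmcnt_eq, Rcnt_eq, words]
  rw [countP_flatMap_linear _ _ _ _ _ _ _ _
    (fun v hv => countP_extend (by omega : 1 ≤ n) hv k)]
  push_cast
  ring
end

section
/- For all integers n ≥ 2 and all integers k ≥ 0 one has the recurrence (in ℤ): R(n,k) = (2k+1)·R(n−1,k) + (2n−4k+3)·R(n−1,k−1) + R⁻(n−1,k−1), where terms with second argument −1 vanish. -/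
/-!
Every signed permutation of rank `m + 1` arises uniquely from one of rank `m` by inserting the
letter `m + 1` or `-(m + 1)` into one of the `m + 1` gaps after the initial `0` (`ins_bijective`).
It is simsun iff the smaller one is simsun and the new word has no double descent
(`isSimsun_ins_iff`).

Fix a simsun `π` of rank `m` with `d` descents. Since `π` has no double descent, splitting a
descent is always admissible, for either sign, and keeps the descent number; so does appending
`m + 1`. This gives `2d + 1` insertions. All others create one descent. Inserting `m + 1` into an
ascent is admissible iff that ascent is not followed by a descent, which leaves
`(m - d) - (d - [π(1) < 0])` choices, because every descent except one at position `0` is preceded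
by an ascent (`count_pos`). Inserting `-(m + 1)` into an ascent or at the end is admissible iff no
descent precedes, which leaves `(m - d + 1) - d` choices (`count_neg`). Summing over `π`
(`Rcnt_succ`) and collecting the terms with `d = k` and `d = k - 1`, where `m = n - 1`, gives the
recurrence.
-/

open Finset

/-! ### Inserting the letter of largest absolute value -/

/-- The signed permutation of rank `m + 1` whose word arises from that of `π` by inserting
`±(m+1)` (negative iff `s = true`) right after the entry `π(p)`, where `0 ≤ p ≤ m`. -/
def ins {m : ℕ} (π : SignedPerm m) (p : Fin (m + 1)) (s : Bool) : SignedPerm (m + 1) :=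
  (((finSuccEquiv' p).trans (Equiv.optionCongr π.1)).trans finSuccEquivLast.symm,
    Fin.insertNth (α := fun _ => Bool) p s π.2)

lemma ins_fst_self {m : ℕ} (π : SignedPerm m) (p : Fin (m + 1)) (s : Bool) :
    (ins π p s).1 p = Fin.last m := by
  simp [ins]

lemma ins_fst_succAbove {m : ℕ} (π : SignedPerm m) (p : Fin (m + 1)) (s : Bool) (j : Fin m) :
    (ins π p s).1 (p.succAbove j) = (π.1 j).castSucc := by
  simp [ins]

lemma ins_snd_self {m : ℕ} (π : SignedPerm m) (p : Fin (m + 1)) (s : Bool) :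
    (ins π p s).2 p = s := by
  simp [ins]

lemma ins_snd_succAbove {m : ℕ} (π : SignedPerm m) (p : Fin (m + 1)) (s : Bool) (j : Fin m) :
    (ins π p s).2 (p.succAbove j) = π.2 j := by
  simp [ins]

lemma ins_injective (m : ℕ) :
    Function.Injective (fun x : SignedPerm m × Fin (m + 1) × Bool => ins x.1 x.2.1 x.2.2) := by
  rintro ⟨π, p, s⟩ ⟨π', p', s'⟩ h
  simp only at h
  have hp : p = p' := by
    have h1 := ins_fst_self π p s
    rw [h, ← ins_fst_self π' p' s'] at h1
    exact (ins π' p' s').1.injective h1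
  subst hp
  have hs : s = s' := by
    rw [← ins_snd_self π p s, h, ins_snd_self]
  subst hs
  have h1 : π.1 = π'.1 := by
    ext j
    have := ins_fst_succAbove π p s j
    rw [h, ins_fst_succAbove] at this
    exact congrArg Fin.val (Fin.castSucc_injective m this).symm
  have h2 : π.2 = π'.2 := by
    funext j
    rw [← ins_snd_succAbove π p s j, h, ins_snd_succAbove]
  rw [Prod.ext h1 h2]

/-- Every signed permutation of rank `m + 1` arises from exactly one insertion: injectivity
suffices because both sides have `2 ^ (m + 1) * (m + 1)!` elements. -/
lemma ins_bijective (m : ℕ) :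
    Function.Bijective (fun x : SignedPerm m × Fin (m + 1) × Bool => ins x.1 x.2.1 x.2.2) := by
  rw [Fintype.bijective_iff_injective_and_card]
  refine ⟨ins_injective m, ?_⟩
  simp [Fintype.card_perm, Nat.factorial_succ, pow_succ]
  ring

/-- The inserted letter `±(m+1)`. -/
def newEntry (m : ℕ) (s : Bool) : ℤ := (if s then -1 else 1) * ((m : ℤ) + 1)

lemma wordFn_ins {m : ℕ} (π : SignedPerm m) (p : Fin (m + 1)) (s : Bool) (i : ℕ) :
    wordFn (ins π p s) i =
      if i ≤ p then wordFn π i else if i = p + 1 then newEntry m s else wordFn π (i - 1) := by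
  have hp := p.2
  by_cases h : 1 ≤ i ∧ i ≤ m + 1
  · have hL : wordFn (ins π p s) i = entry (ins π p s) ⟨i - 1, by omega⟩ := by
      simp [wordFn, h]
    rw [hL]
    rcases lt_trichotomy i (p + 1) with h1 | h1 | h1
    · have hj : (⟨i - 1, by omega⟩ : Fin (m + 1)) = p.succAbove ⟨i - 1, by omega⟩ := by
        rw [Fin.succAbove_of_castSucc_lt]
        · rfl
        · simp [Fin.lt_def]; omega
      rw [if_pos (by omega), hj, entry, ins_fst_succAbove, ins_snd_succAbove]
      simp [wordFn, entry, show 1 ≤ i ∧ i ≤ m by omega]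
    · have hj : (⟨i - 1, by omega⟩ : Fin (m + 1)) = p := by
        ext; simp; omega
      rw [if_neg (by omega), if_pos h1, hj, entry, ins_fst_self, ins_snd_self]
      simp [newEntry]
    · have hj : (⟨i - 1, by omega⟩ : Fin (m + 1)) = p.succAbove ⟨i - 2, by omega⟩ := by
        rw [Fin.succAbove_of_le_castSucc]
        · ext; simp; omega
        · simp [Fin.le_def]; omega
      rw [if_neg (by omega), if_neg (by omega), hj, entry, ins_fst_succAbove, ins_snd_succAbove]
      simp [wordFn, entry, show 1 ≤ i - 1 ∧ i - 1 ≤ m by omega, Nat.sub_sub]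
  · simp only [wordFn, h, dite_false]
    split_ifs <;> first | rfl | omega

lemma length_word {n : ℕ} (π : SignedPerm n) : (word π).length = n + 1 := by
  simp [word]

lemma getElem_word {n : ℕ} (π : SignedPerm n) (i : ℕ) (h : i < (word π).length) :
    (word π)[i] = wordFn π i := by
  have h' := length_word π
  cases i with
  | zero => simp [word, wordFn]
  | succ j => simp [word, wordFn, show j + 1 ≤ n by omega]

lemma wordFn_natAbs_le {n : ℕ} (π : SignedPerm n) (i : ℕ) : (wordFn π i).natAbs ≤ n := by
  unfold wordFn entry
  by_cases h : 1 ≤ i ∧ i ≤ n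
  · have := (π.1 ⟨i - 1, by omega⟩).2
    rw [dif_pos h]
    split_ifs <;> omega
  · simp [h]

lemma word_ins {m : ℕ} (π : SignedPerm m) (p : Fin (m + 1)) (s : Bool) :
    word (ins π p s) = (word π).insertIdx (p + 1) (newEntry m s) := by
  have hp := p.2
  have h1 := length_word π
  have h2 := length_word (ins π p s)
  apply List.ext_getElem
  · rw [List.length_insertIdx_of_le_length (by omega)]; omega
  · intro i hi hi'
    rw [getElem_word, wordFn_ins, List.getElem_insertIdx]
    split_ifs <;> first | rfl | omega | rw [getElem_word]

/-! ### Double descents and descents by position -/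

lemma noDD_iff (L : List ℤ) :
    noDD L = true ↔ ∀ i (h : i + 2 < L.length), ¬ (L[i + 1] < L[i] ∧ L[i + 2] < L[i + 1]) := by
  fun_induction noDD L with
  | case1 a b c rest ih =>
    simp only [Bool.and_eq_true, ih]
    constructor
    · rintro ⟨h0, h⟩ i hi
      cases i with
      | zero => simpa [imp_iff_not_or] using h0
      | succ j => exact h j (by simp at hi ⊢; omega)
    · intro h
      refine ⟨by simpa [imp_iff_not_or] using h 0 (by simp), fun i hi => ?_⟩
      exact h (i + 1) (by simp at hi ⊢; omega)
  | case2 L h =>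
    simp only [true_iff]
    intro i hi
    exfalso
    rcases L with _ | ⟨a, _ | ⟨b, _ | ⟨c, L⟩⟩⟩
    · simp at hi
    · simp at hi
    · simp at hi
    · exact h a b c L rfl

/-- `D π i` says that `i` is a type-B descent position of `π`; false beyond the word. -/
def D {n : ℕ} (π : SignedPerm n) (i : ℕ) : Prop := i < n ∧ wordFn π (i + 1) < wordFn π i

instance {n : ℕ} (π : SignedPerm n) : DecidablePred (D π) := fun _ => by
  unfold D; infer_instance

lemma noDD_word_iff {n : ℕ} (π : SignedPerm n) :
    noDD (word π) = true ↔ ∀ i, ¬ (D π i ∧ D π (i + 1)) := by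
  rw [noDD_iff]
  have h1 := length_word π
  constructor
  · rintro h i ⟨⟨h2, h3⟩, h4, h5⟩
    apply h i (by omega)
    simp only [getElem_word]
    exact ⟨h3, h5⟩
  · rintro h i hi ⟨h3, h5⟩
    simp only [getElem_word] at h3 h5
    exact h i ⟨⟨by omega, h3⟩, by omega, h5⟩

lemma desB_eq_sum {n : ℕ} (π : SignedPerm n) :
    (desB π : ℤ) = ∑ i ∈ range n, if D π i then 1 else 0 := by
  rw [desB, Finset.sum_boole]
  congr 2
  ext i
  simp only [Finset.mem_filter, Finset.mem_range]
  unfold D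
  tauto

lemma sum_D_succ {m : ℕ} (π : SignedPerm m) :
    ∑ i ∈ range m, (if D π (i + 1) then (1 : ℤ) else 0) =
      desB π - if D π 0 then 1 else 0 := by
  have hm : ¬ D π m := fun h => lt_irrefl _ h.1
  have h := Finset.sum_range_succ' (fun i => if D π i then (1 : ℤ) else 0) m
  rw [Finset.sum_range_succ, if_neg hm, ← desB_eq_sum] at h
  linarith

lemma filter_word_full {n : ℕ} (π : SignedPerm n) :
    (word π).filter (fun a => a.natAbs ≤ n) = word π := by
  rw [List.filter_eq_self]
  intro a ha
  obtain ⟨i, hi, rfl⟩ := List.getElem_of_mem ha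
  rw [getElem_word]
  simpa using wordFn_natAbs_le π i

lemma noDD_of_isSimsun {n : ℕ} {π : SignedPerm n} (h : IsSimsun π) : noDD (word π) = true := by
  simpa [filter_word_full] using h n le_rfl

/-! ### The effect of an insertion on the simsun property and on descents -/

lemma filter_insertIdx_of_neg (f : ℤ → Bool) (x : ℤ) (hx : f x = false) (L : List ℤ) (i : ℕ) :
    (L.insertIdx i x).filter f = L.filter f := by
  induction i generalizing L with
  | zero => simp [hx]
  | succ i ih =>
    cases L with
    | nil => simp
    | cons a L => simp [List.filter_cons, ih]

lemma filter_word_ins {m : ℕ} (π : SignedPerm m) (p : Fin (m + 1)) (s : Bool) (k : ℕ)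
    (hk : k ≤ m) :
    (word (ins π p s)).filter (fun a => a.natAbs ≤ k) =
      (word π).filter (fun a => a.natAbs ≤ k) := by
  have hx : ¬ (newEntry m s).natAbs ≤ k := by
    unfold newEntry; split_ifs <;> omega
  rw [word_ins, filter_insertIdx_of_neg _ _ (by simpa using hx)]

/-- The simsun condition on the restrictions to smaller letters does not see the new letter. -/
lemma isSimsun_ins_iff {m : ℕ} (π : SignedPerm m) (p : Fin (m + 1)) (s : Bool) :
    IsSimsun (ins π p s) ↔ IsSimsun π ∧ noDD (word (ins π p s)) = true := by
  constructor
  · intro h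
    refine ⟨fun k hk => ?_, noDD_of_isSimsun h⟩
    rw [← filter_word_ins π p s k hk]
    exact h k (by omega)
  · rintro ⟨h, h'⟩ k hk
    rcases Nat.lt_or_ge m k with h1 | h1
    · obtain rfl : k = m + 1 := by omega
      rwa [filter_word_full]
    · rw [filter_word_ins π p s k h1]
      exact h k h1

/-- The descent pattern after insertion: the two positions touching the new letter read
an ascent, then a descent for `+(m+1)` (the descent only if the letter is not last) and
a descent, then an ascent for `-(m+1)`; they replace position `p` of the old pattern. -/
lemma D_ins {m : ℕ} (π : SignedPerm m) (p : Fin (m + 1)) (s : Bool) (i : ℕ) :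
    D (ins π p s) i ↔
      if i < p then D π i else if i = p then s = true
      else if i = p + 1 then s = false ∧ (p : ℕ) < m else D π (i - 1) := by
  have hp := p.2
  have hb := wordFn_natAbs_le π p
  have hb' := wordFn_natAbs_le π (p + 1)
  have hn : newEntry m s = if s then -((m : ℤ) + 1) else (m : ℤ) + 1 := by
    unfold newEntry; split_ifs <;> ring
  unfold D
  rw [wordFn_ins, wordFn_ins, hn]
  rcases lt_trichotomy i p with h | h | h
  · rw [if_pos h, if_pos (by omega), if_pos (by omega)]
    simp [show i < m + 1 by omega, show i < m by omega]
  · subst h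
    cases s <;> simp at hn ⊢ <;> omega
  · by_cases h1 : i = p + 1
    · subst h1
      cases s <;> simp at hn ⊢ <;> omega
    · simp only [show ¬ i + 1 ≤ p by omega, show ¬ i + 1 = p + 1 by omega, show ¬ i ≤ p by omega,
        show ¬ i < p by omega, show ¬ i = p by omega, h1, if_false]
      rw [Nat.add_sub_cancel, Nat.sub_add_cancel (by omega)]
      constructor <;> rintro ⟨h2, h3⟩ <;> exact ⟨by omega, h3⟩

lemma noDD_ins_pos {m : ℕ} (π : SignedPerm m) (p : Fin (m + 1)) (hπ : noDD (word π) = true) :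
    noDD (word (ins π p false)) = true ↔ ¬ D π (p + 1) := by
  rw [noDD_word_iff] at hπ ⊢
  simp only [D_ins]
  constructor
  · intro h hD
    have := h (p + 1)
    have h2 : (p : ℕ) < m := by have := hD.1; omega
    simp [h2, hD] at this
    grind
  · intro h i
    rcases lt_trichotomy i p with h1 | h1 | h1
    · have := hπ i
      grind
    · grind
    · rcases eq_or_ne i (p + 1) with h2 | h2
      · grind
      · have := hπ (i - 1)
        rw [Nat.sub_add_cancel (by omega)] at this
        grind

lemma noDD_ins_neg {m : ℕ} (π : SignedPerm m) (p : Fin (m + 1)) (hπ : noDD (word π) = true) :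
    noDD (word (ins π p true)) = true ↔ ¬ (1 ≤ (p : ℕ) ∧ D π (p - 1)) := by
  rw [noDD_word_iff] at hπ ⊢
  simp only [D_ins]
  constructor
  · rintro h ⟨hp, hD⟩
    have := h (p - 1)
    rw [Nat.sub_add_cancel hp] at this
    simp [hD, show 0 < (p : ℕ) by omega] at this
  · intro h i
    rcases lt_trichotomy (i + 1) p with h1 | h1 | h1
    · have := hπ i
      grind
    · rw [← h1] at h
      grind
    · rcases le_or_gt i (p + 1) with h2 | h2
      · grind
      · have := hπ (i - 1)
        rw [Nat.sub_add_cancel (by omega)] at this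
        grind

/-- Insertion adds a descent exactly when it does not split an old descent, except that
`+(m+1)` at the end adds none. -/
lemma desB_ins {m : ℕ} (π : SignedPerm m) (p : Fin (m + 1)) (s : Bool) :
    (desB (ins π p s) : ℤ) =
      desB π + if (s = false ∧ (p : ℕ) = m) ∨ D π p then 0 else 1 := by
  have hp := p.2
  rw [desB_eq_sum, desB_eq_sum]
  simp only [D_ins]
  rcases Nat.lt_or_ge p m with h | h
  · obtain ⟨q, hq⟩ := Nat.exists_eq_add_of_lt h
    have e1 : range (m + 1) = range (p + (1 + (1 + q))) := by congr 1; omega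
    have e2 : range m = range (p + (1 + q)) := by congr 1; omega
    rw [e1, e2]
    simp only [Finset.sum_range_add, Finset.sum_range_one]
    have e3 : ∑ x ∈ range (p : ℕ), (if (if x < p then D π x else if x = p then s = true
        else if x = p + 1 then s = false ∧ (p : ℕ) < m else D π (x - 1)) then (1 : ℤ) else 0)
        = ∑ x ∈ range (p : ℕ), if D π x then 1 else 0 :=
      Finset.sum_congr rfl fun x hx => by simp [Finset.mem_range.1 hx]
    rw [e3]
    have e4 : ∀ x, (p : ℕ) + (1 + (1 + x)) - 1 = p + (1 + x) := fun x => by omega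
    have e5 : ∀ x, ¬ ((p : ℕ) + (1 + (1 + x)) < p) := fun x => by omega
    have e6 : ∀ x, ¬ ((p : ℕ) + (1 + (1 + x)) = p) := fun x => by omega
    have e7 : ∀ x, ¬ ((p : ℕ) + (1 + (1 + x)) = p + 1) := fun x => by omega
    simp only [e4, e5, e6, e7, if_false]
    cases s <;> by_cases hD : D π p <;> simp [hD, h, h.ne] <;> ring
  · have hpm : (p : ℕ) = m := by omega
    have hD : ¬ D π p := fun hD => by have := hD.1; omega
    rw [Finset.sum_range_succ, hpm]
    rw [hpm] at hD
    have e3 : ∑ x ∈ range m, (if (if x < m then D π x else if x = m then s = true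
        else if x = m + 1 then s = false ∧ m < m else D π (x - 1)) then (1 : ℤ) else 0)
        = ∑ x ∈ range m, if D π x then 1 else 0 :=
      Finset.sum_congr rfl fun x hx => by simp [Finset.mem_range.1 hx]
    rw [e3]
    cases s <;> simp [hD]

/-! ### Counting admissible insertions -/

/-- The number of admissible insertions of `+(m+1)` producing descent number `k`. Splitting a
descent or appending keeps the descent number; splitting an ascent raises it and is admissible
iff no descent follows. Every descent except one at position `0` follows an ascent. -/
lemma count_pos {m : ℕ} (π : SignedPerm m) (hπ : noDD (word π) = true) (k : ℤ) :
    ∑ p : Fin (m + 1), (if noDD (word (ins π p false)) = true ∧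
        (desB (ins π p false) : ℤ) = k then (1 : ℤ) else 0) =
      (desB π + 1) * (if (desB π : ℤ) = k then 1 else 0) +
      (m - 2 * desB π + if D π 0 then 1 else 0) * (if (desB π : ℤ) + 1 = k then 1 else 0) := by
  have hd := desB_eq_sum π
  have hDD := (noDD_word_iff π).1 hπ
  simp only [noDD_ins_pos π _ hπ, desB_ins, true_and]
  rw [Fin.sum_univ_eq_sum_range (fun p : ℕ => if ¬ D π (p + 1) ∧ (desB π : ℤ) +
    (if p = m ∨ D π p then 0 else 1) = k then (1 : ℤ) else 0) (m + 1),
    Finset.sum_range_succ]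
  have hm1 : ¬ D π (m + 1) := fun h => by have := h.1; omega
  have key : ∀ p ∈ range m, (if ¬ D π (p + 1) ∧ (desB π : ℤ) +
      (if p = m ∨ D π p then 0 else 1) = k then (1 : ℤ) else 0) =
      (if D π p then 1 else 0) * (if (desB π : ℤ) = k then 1 else 0) +
      (1 - (if D π p then 1 else 0) - (if D π (p + 1) then 1 else 0)) *
        (if (desB π : ℤ) + 1 = k then 1 else 0) := by
    intro p hp
    have hpm : p ≠ m := (Finset.mem_range.1 hp).ne
    have := hDD p
    by_cases h1 : D π p <;> by_cases h2 : D π (p + 1) <;> simp [h1, h2, hpm] <;> simp_all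
  rw [Finset.sum_congr rfl key, Finset.sum_add_distrib, ← Finset.sum_mul, ← Finset.sum_mul,
    Finset.sum_sub_distrib, Finset.sum_sub_distrib, ← hd]
  rw [sum_D_succ]
  simp only [hm1, not_false_eq_true, true_and, true_or, if_true, add_zero, Finset.sum_const,
    Finset.card_range, nsmul_eq_mul]
  ring

/-- The number of admissible insertions of `-(m+1)` producing descent number `k`. Splitting a
descent keeps the descent number; splitting an ascent or appending raises it and is admissible
iff no descent precedes. -/
lemma count_neg {m : ℕ} (π : SignedPerm m) (hπ : noDD (word π) = true) (k : ℤ) :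
    ∑ p : Fin (m + 1), (if noDD (word (ins π p true)) = true ∧
        (desB (ins π p true) : ℤ) = k then (1 : ℤ) else 0) =
      desB π * (if (desB π : ℤ) = k then 1 else 0) +
      (m + 1 - 2 * desB π) * (if (desB π : ℤ) + 1 = k then 1 else 0) := by
  have hd := desB_eq_sum π
  have hDD := (noDD_word_iff π).1 hπ
  simp only [noDD_ins_neg π _ hπ, desB_ins]
  rw [Fin.sum_univ_eq_sum_range (fun p : ℕ => if ¬ (1 ≤ p ∧ D π (p - 1)) ∧ (desB π : ℤ) +
    (if (true = false ∧ p = m) ∨ D π p then 0 else 1) = k then (1 : ℤ) else 0) (m + 1),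
    Finset.sum_range_succ']
  have key : ∀ p ∈ range m, (if ¬ (1 ≤ p + 1 ∧ D π (p + 1 - 1)) ∧ (desB π : ℤ) +
      (if (true = false ∧ p + 1 = m) ∨ D π (p + 1) then 0 else 1) = k then (1 : ℤ) else 0) =
      (if D π (p + 1) then 1 else 0) * (if (desB π : ℤ) = k then 1 else 0) +
      (1 - (if D π p then 1 else 0) - (if D π (p + 1) then 1 else 0)) *
        (if (desB π : ℤ) + 1 = k then 1 else 0) := by
    intro p hp
    have := hDD p
    by_cases h1 : D π p <;> by_cases h2 : D π (p + 1) <;> simp [h1, h2] <;> simp_all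
  rw [Finset.sum_congr rfl key, Finset.sum_add_distrib, ← Finset.sum_mul, ← Finset.sum_mul,
    Finset.sum_sub_distrib, Finset.sum_sub_distrib, ← hd]
  rw [sum_D_succ]
  have first : (if ¬ (1 ≤ 0 ∧ D π (0 - 1)) ∧ (desB π : ℤ) +
      (if (true = false ∧ 0 = m) ∨ D π 0 then 0 else 1) = k then (1 : ℤ) else 0) =
      (if D π 0 then 1 else 0) * (if (desB π : ℤ) = k then 1 else 0) +
      (1 - (if D π 0 then 1 else 0)) * (if (desB π : ℤ) + 1 = k then 1 else 0) := by
    by_cases h0 : D π 0 <;> simp [h0]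
  rw [first]
  simp only [Finset.sum_const, Finset.card_range, nsmul_eq_mul]
  ring

lemma D_zero_iff {m : ℕ} (π : SignedPerm m) : D π 0 ↔ wordFn π 1 < 0 := by
  have h0 : wordFn π 0 = 0 := by simp [wordFn]
  unfold D
  rw [h0]
  refine ⟨fun h => h.2, fun h => ⟨?_, h⟩⟩
  by_contra hm
  have h1 : wordFn π 1 = 0 := by simp [wordFn, show ¬ (1 ≤ m) by omega]
  simp [h1] at h

/-- Each simsun `π` of rank `m` with `d` descents has `2d + 1` simsun insertions with `d` descents
and `2m + 1 - 4d + [π(1) < 0]` with `d + 1` descents, and these account for all of rank `m + 1`. -/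
lemma Rcnt_succ (m : ℕ) (k : ℤ) :
    Rcnt (m + 1) k = ∑ π ∈ RB m,
      ((2 * (desB π : ℤ) + 1) * (if (desB π : ℤ) = k then 1 else 0) +
      (2 * (m : ℤ) + 1 - 4 * (desB π : ℤ) + if wordFn π 1 < 0 then 1 else 0) *
        (if (desB π : ℤ) + 1 = k then 1 else 0)) := by
  have h1 : Rcnt (m + 1) k = ∑ π : SignedPerm (m + 1),
      if IsSimsun π ∧ (desB π : ℤ) = k then (1 : ℤ) else 0 := by
    rw [Rcnt, RB, Finset.filter_filter, Finset.sum_boole]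
  rw [h1, ← (ins_bijective m).sum_comp, Fintype.sum_prod_type, RB, Finset.sum_filter]
  apply Finset.sum_congr rfl
  intro π _
  simp only [isSimsun_ins_iff]
  by_cases h : IsSimsun π
  · have hn := noDD_of_isSimsun h
    simp only [h, true_and, if_true]
    rw [Fintype.sum_prod_type_right, Fintype.sum_bool, count_pos π hn, count_neg π hn]
    simp only [D_zero_iff]
    ring
  · simp [h]

/-- For all integers `n ≥ 2`, `k ≥ 0`:
`R(n,k) = (2k+1)·R(n−1,k) + (2n−4k+3)·R(n−1,k−1) + R⁻(n−1,k−1)`. -/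
theorem stmt2 (n : ℕ) (hn : 2 ≤ n) (k : ℤ) (hk : 0 ≤ k) :
    Rcnt n k =
      (2 * k + 1) * Rcnt (n - 1) k + (2 * (n : ℤ) - 4 * k + 3) * Rcnt (n - 1) (k - 1) +
        Rmcnt (n - 1) (k - 1) := by
  obtain ⟨m, rfl⟩ : ∃ m, n = m + 1 := ⟨n - 1, by omega⟩
  have h1 : ∀ j, Rcnt m j = ∑ π ∈ RB m, if (desB π : ℤ) = j then (1 : ℤ) else 0 := fun j => by
    rw [Rcnt, Finset.sum_boole]
  have h2 : ∀ j, Rmcnt m j = ∑ π ∈ RB m,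
      if wordFn π 1 < 0 ∧ (desB π : ℤ) = j then (1 : ℤ) else 0 := fun j => by
    rw [Rmcnt, RBm, Finset.filter_filter, Finset.sum_boole]
  rw [Rcnt_succ, Nat.add_sub_cancel, h1, h1, h2, Finset.mul_sum, Finset.mul_sum,
    ← Finset.sum_add_distrib, ← Finset.sum_add_distrib]
  apply Finset.sum_congr rfl
  intro π _
  have hk1 : (desB π : ℤ) + 1 = k ↔ (desB π : ℤ) = k - 1 := by omega
  simp only [hk1]
  push_cast
  by_cases ha : (desB π : ℤ) = k
  · have hb : ¬ k = k - 1 := by omega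
    simp [ha, hb]
  · by_cases hb : (desB π : ℤ) = k - 1
    · by_cases hc : wordFn π 1 < 0 <;> simp [hb, hc] <;> ring
    · simp [ha, hb]
end
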